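/- Let n > 1 and let r = (r_1, …, r_n) ∈ ℕ^n satisfy r_1 + 2r_2 + ⋯ + n·r_n = n and |r| := r_1 + ⋯ + r_n < n. Then the number of Dyck paths of length 2n with no returns and with ascent type r equals the cardinality of ℬ(r), the set of words of length n − 1 lying in ℬ with exactly n − |r| − 1 occurrences of letter 0 and exactly r_i occurrences of letter i for 1 ≤ i ≤ n. -/

import Mathlib

/-- A Dyck path of length `2n`: a list of `2n` steps (`true` = U, `false` = D) with `n` U's
and `n` D's such that every prefix has at least as many U's as D's. -/
def IsDyckPath (n : ℕ) (l : List Bool) : Prop :=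
  l.length = 2 * n ∧ l.count true = n ∧ l.count false = n ∧
    ∀ k, (l.take k).count false ≤ (l.take k).count true

/-- The path `l` has ascent type `r = (r_1, …, r_n)`: for each `i`, the number of maximal
consecutive runs of U-steps of length `i` is `r_i`. -/
def HasAscentType (n : ℕ) (l : List Bool) (r : Fin n → ℕ) : Prop :=
  ∀ i : Fin n, ((l.splitOn false).map List.length).count (i.1 + 1) = r i

/-- The weight of a word: the sum of `(a - 1)` over its letters, as an integer. -/
def wt (w : List ℕ) : ℤ := (w.map (fun a => (a : ℤ) - 1)).sum

/-- The set `ℬ` of words of weight 1 all of whose nonempty prefixes have positive weight. -/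
def Bset : Set (List ℕ) :=
  {w | wt w = 1 ∧ ∀ j, 0 < j → j ≤ w.length → 0 < wt (w.take j)}

/-!
Encode a word `a₁ ⋯ aₘ` as the path `U^a₁ D ⋯ U^aₘ D`. The height after the `j`-th block is the
weight of the first `j` letters, and the height of a path between two such points is smallest at
the block ends, so the nonempty prefixes of the path stay above the axis exactly when those of the
word have positive weight. Words of `ℬ` thus become paths from height `0` to height `1` that never
return to the axis, which one more `D` completes to Dyck paths without returns. Every such path of
semilength greater than `1` ends in `DD`, so all of them arise. The letters are the ascent lengths,
and the number of letters `0` is determined by the length of the word.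
-/

/-- The height of the endpoint of a lattice path, counting `true` as an up-step `U` and `false` as
a down-step `D`. -/
def height (l : List Bool) : ℤ := l.count true - l.count false

/-- The lattice path `U^a₁ D U^a₂ D ⋯ U^aₘ D` encoding the word `a₁ a₂ ⋯ aₘ`. -/
def pathOfWord (w : List ℕ) : List Bool :=
  w.flatMap fun a => List.replicate a true ++ [false]

/-- The path of a word followed by one more down-step; on words of `ℬ`, whose paths end at
height `1`, this closes the path on the axis. -/
def closedPathOfWord (w : List ℕ) : List Bool := pathOfWord w ++ [false]

/-- A prime Dyck path of semilength `n`: a Dyck path with no returns. -/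
def IsPrimeDyckPath (n : ℕ) (l : List Bool) : Prop :=
  IsDyckPath n l ∧ ∀ k, 0 < k → k < 2 * n → (l.take k).count true ≠ (l.take k).count false

theorem forall_take_iff_forall_prefix {α : Type*} {p : List α → Prop} {l : List α} :
    (∀ k, 0 < k → k ≤ l.length → p (l.take k)) ↔ ∀ u, u <+: l → u ≠ [] → p u := by
  constructor
  · intro h u hu hne
    rw [List.prefix_iff_eq_take.1 hu]
    exact h _ (List.length_pos_iff.2 hne) hu.length_le
  · intro h k hk hkl
    refine h _ (List.take_prefix k l) ?_
    rw [← List.length_pos_iff, List.length_take]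
    omega

theorem length_eq_count_zero_add_sum_count {n : ℕ} {w : List ℕ} (h : ∀ a ∈ w, a ≤ n) :
    w.length = w.count 0 + ∑ i : Fin n, w.count (i.1 + 1) := by
  have hcard := Multiset.sum_count_eq_card (s := Finset.range (n + 1)) (m := (w : Multiset ℕ))
    fun a ha => Finset.mem_range_succ_iff.2 (h a ha)
  simp only [Multiset.coe_count, Multiset.coe_card] at hcard
  rw [← hcard, Finset.sum_range_succ', Fin.sum_univ_eq_sum_range (fun i => w.count (i + 1)),
    add_comm]

@[simp]
theorem height_append (l m : List Bool) : height (l ++ m) = height l + height m := by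
  simp only [height, List.count_append, Nat.cast_add]
  ring

@[simp]
theorem height_replicate_true (a : ℕ) : height (List.replicate a true) = a := by
  simp [height, List.count_replicate]

@[simp]
theorem height_singleton_true : height [true] = 1 := rfl

@[simp]
theorem height_singleton_false : height [false] = -1 := rfl

theorem wt_cons (a : ℕ) (w : List ℕ) : wt (a :: w) = a - 1 + wt w := by
  simp [wt]

theorem wt_eq_sum_sub_length (w : List ℕ) : wt w = w.sum - w.length := by
  induction w with
  | nil => rfl
  | cons a w ih =>
    rw [wt_cons, ih, List.sum_cons, List.length_cons]
    push_cast
    ring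

theorem mem_Bset_iff_forall_prefix {w : List ℕ} :
    w ∈ Bset ↔ wt w = 1 ∧ ∀ u, u <+: w → u ≠ [] → 0 < wt u :=
  and_congr_right fun _ => forall_take_iff_forall_prefix (p := fun u => 0 < wt u)

@[simp]
theorem pathOfWord_nil : pathOfWord [] = [] := rfl

@[simp]
theorem pathOfWord_cons (a : ℕ) (w : List ℕ) :
    pathOfWord (a :: w) = List.replicate a true ++ false :: pathOfWord w := by
  simp [pathOfWord]

@[simp]
theorem pathOfWord_append (v w : List ℕ) :
    pathOfWord (v ++ w) = pathOfWord v ++ pathOfWord w :=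
  List.flatMap_append

theorem length_pathOfWord (w : List ℕ) : (pathOfWord w).length = w.sum + w.length := by
  induction w with
  | nil => rfl
  | cons a w ih =>
    simp only [pathOfWord_cons, List.length_append, List.length_replicate, List.length_cons, ih,
      List.sum_cons]
    ring

theorem height_pathOfWord (w : List ℕ) : height (pathOfWord w) = wt w := by
  induction w with
  | nil => rfl
  | cons a w ih =>
    rw [pathOfWord_cons, List.append_cons, height_append, height_append, height_replicate_true,
      height_singleton_false, ih, wt_cons, sub_eq_add_neg]

theorem map_length_splitOn_pathOfWord_append (w : List ℕ) (l : List Bool) :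
    ((pathOfWord w ++ l).splitOn false).map List.length =
      w ++ (l.splitOn false).map List.length := by
  induction w with
  | nil => rfl
  | cons a w ih =>
    have hnotMem : false ∉ List.replicate a true := by simp
    rw [pathOfWord_cons, List.append_assoc, List.cons_append,
      List.splitOn_append_cons_self_of_not_mem hnotMem, List.map_cons, List.length_replicate, ih,
      List.cons_append]

theorem map_length_splitOn_closedPathOfWord (w : List ℕ) :
    ((closedPathOfWord w).splitOn false).map List.length = w ++ [0, 0] :=
  map_length_splitOn_pathOfWord_append w [false]

theorem closedPathOfWord_injective : Function.Injective closedPathOfWord := by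
  intro v w h
  apply List.append_cancel_right (bs := [0, 0])
  rw [← map_length_splitOn_closedPathOfWord, h, map_length_splitOn_closedPathOfWord]

theorem hasAscentType_closedPathOfWord_iff {n : ℕ} {w : List ℕ} {r : Fin n → ℕ} :
    HasAscentType n (closedPathOfWord w) r ↔ ∀ i : Fin n, w.count (i.1 + 1) = r i := by
  simp [HasAscentType, map_length_splitOn_closedPathOfWord]

theorem exists_pathOfWord_eq_concat_false (l : List Bool) : ∃ w, pathOfWord w = l ++ [false] := by
  induction l with
  | nil => exact ⟨[0], rfl⟩
  | cons b l ih =>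
    obtain ⟨w, hw⟩ := ih
    cases b with
    | false => exact ⟨0 :: w, by simp [hw]⟩
    | true =>
      obtain _ | ⟨a, w⟩ := w
      · simp at hw
      · exact ⟨(a + 1) :: w, by simpa [List.replicate_succ] using hw⟩

theorem exists_prefix_of_prefix_pathOfWord {w : List ℕ} {p : List Bool} (hp : p <+: pathOfWord w) :
    ∃ u b, u <+: w ∧ p = pathOfWord u ++ List.replicate b true := by
  induction w using List.reverseRecOn with
  | nil => exact ⟨[], 0, List.nil_prefix, List.prefix_nil.1 hp⟩
  | append_singleton w a ih =>
    have hpath : pathOfWord (w ++ [a]) = pathOfWord w ++ List.replicate a true ++ [false] := by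
      simp
    rw [hpath, List.prefix_concat_iff, ← hpath] at hp
    obtain rfl | hp := hp
    · exact ⟨w ++ [a], 0, List.prefix_rfl, by simp⟩
    obtain hpw | ⟨t, rfl⟩ := List.prefix_or_prefix_of_prefix hp (List.prefix_append _ _)
    · obtain ⟨u, b, hu, rfl⟩ := ih hpw
      exact ⟨u, b, List.prefix_append_of_prefix hu, rfl⟩
    · rw [List.prefix_append_right_inj, List.prefix_replicate_iff] at hp
      exact ⟨w, t.length, List.prefix_append _ _, by rw [← hp.2]⟩

theorem forall_prefix_height_pathOfWord_pos_iff {w : List ℕ} :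
    (∀ p, p <+: pathOfWord w → p ≠ [] → 0 < height p) ↔ ∀ u, u <+: w → u ≠ [] → 0 < wt u := by
  constructor
  · rintro h u ⟨v, rfl⟩ hu
    rw [← height_pathOfWord]
    refine h _ (by simp) ?_
    rw [← List.length_pos_iff, length_pathOfWord]
    exact Nat.add_pos_right _ (List.length_pos_iff.2 hu)
  · intro h p hp hne
    obtain ⟨u, b, hu, rfl⟩ := exists_prefix_of_prefix_pathOfWord hp
    rw [height_append, height_pathOfWord, height_replicate_true]
    obtain rfl | hune := eq_or_ne u []
    · have hb : b ≠ 0 := by simpa using hne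
      simpa [wt] using Nat.pos_of_ne_zero hb
    · exact add_pos_of_pos_of_nonneg (h u hu hune) (Int.natCast_nonneg b)

theorem isPrimeDyckPath_concat_false_iff {n : ℕ} {m : List Bool} :
    IsPrimeDyckPath n (m ++ [false]) ↔
      m.length + 1 = 2 * n ∧ height m = 1 ∧ ∀ p, p <+: m → p ≠ [] → 0 < height p := by
  rw [← forall_take_iff_forall_prefix (p := fun p => 0 < height p)]
  have htotal := List.count_true_add_count_false m
  have htrue : (m ++ [false]).count true = m.count true := by simp
  have hfalse : (m ++ [false]).count false = m.count false + 1 := by simp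
  simp only [IsPrimeDyckPath, IsDyckPath, height, List.length_append, List.length_singleton,
    htrue, hfalse]
  constructor
  · rintro ⟨⟨hlen, hup, -, hnonneg⟩, hnoReturn⟩
    refine ⟨hlen, by omega, fun k hk hkm => ?_⟩
    have hle := hnonneg k
    have hne := hnoReturn k hk (by omega)
    rw [List.take_append_of_le_length hkm] at hle hne
    omega
  · rintro ⟨hlen, hheight, hpos⟩
    refine ⟨⟨hlen, by omega, by omega, fun k => ?_⟩, fun k hk hkn => ?_⟩
    · obtain rfl | hk := k.eq_zero_or_pos
      · simp
      obtain hkm | hmk := le_or_gt k m.length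
      · have := hpos k hk hkm
        rw [List.take_append_of_le_length hkm]
        omega
      · rw [List.take_of_length_le (by simpa using hmk), htrue, hfalse]
        omega
    · have hkm : k ≤ m.length := by omega
      have := hpos k hk hkm
      rw [List.take_append_of_le_length hkm]
      omega

theorem isPrimeDyckPath_closedPathOfWord_iff {n : ℕ} (hn : 0 < n) {w : List ℕ} :
    IsPrimeDyckPath n (closedPathOfWord w) ↔ w.length = n - 1 ∧ w ∈ Bset := by
  rw [closedPathOfWord, isPrimeDyckPath_concat_false_iff, forall_prefix_height_pathOfWord_pos_iff,
    height_pathOfWord, length_pathOfWord, mem_Bset_iff_forall_prefix, ← and_assoc, ← and_assoc]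
  refine and_congr_left fun _ => and_congr_left fun hwt => ?_
  rw [wt_eq_sum_sub_length] at hwt
  omega

theorem IsDyckPath.exists_eq_concat_false {n : ℕ} (hn : 0 < n) {l : List Bool}
    (hl : IsDyckPath n l) : ∃ m, l = m ++ [false] := by
  obtain ⟨hlen, hup, hdown, hnonneg⟩ := hl
  obtain rfl | ⟨m, b, rfl⟩ := l.eq_nil_or_concat'
  · rw [List.length_nil] at hlen
    omega
  cases b with
  | false => exact ⟨m, rfl⟩
  | true =>
    have hm : m.count false ≤ m.count true := by simpa using hnonneg m.length
    have htrue : (m ++ [true]).count true = m.count true + 1 := by simp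
    have hfalse : (m ++ [true]).count false = m.count false := by simp
    omega

theorem IsPrimeDyckPath.exists_eq_append_false_false {n : ℕ} (hn : 1 < n) {l : List Bool}
    (hl : IsPrimeDyckPath n l) : ∃ q, l = q ++ [false] ++ [false] := by
  obtain ⟨m, rfl⟩ := hl.1.exists_eq_concat_false (by omega)
  obtain ⟨hlen, hheight, hpos⟩ := isPrimeDyckPath_concat_false_iff.1 hl
  obtain rfl | ⟨q, b, rfl⟩ := m.eq_nil_or_concat'
  · rw [List.length_nil] at hlen
    omega
  cases b with
  | false => exact ⟨q, rfl⟩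
  | true =>
    have hq : q ≠ [] := by
      rintro rfl
      rw [List.nil_append, List.length_singleton] at hlen
      omega
    have hqpos : 0 < height q := hpos q (List.prefix_append _ _) hq
    rw [height_append, height_singleton_true] at hheight
    omega

theorem setOf_isPrimeDyckPath_eq_image {n : ℕ} (hn : 1 < n) :
    {l | IsPrimeDyckPath n l} = closedPathOfWord '' {w | w.length = n - 1 ∧ w ∈ Bset} := by
  have hiff := @isPrimeDyckPath_closedPathOfWord_iff n (by omega)
  ext l
  constructor
  · intro hl
    obtain ⟨q, rfl⟩ := IsPrimeDyckPath.exists_eq_append_false_false hn hl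
    obtain ⟨w, hw⟩ := exists_pathOfWord_eq_concat_false q
    rw [← hw] at hl ⊢
    exact ⟨w, hiff.1 hl, rfl⟩
  · rintro ⟨w, hw, rfl⟩
    exact hiff.2 hw

theorem count_zero_eq_of_mem_Bset {n : ℕ} (hn : 0 < n) {w : List ℕ} (hlen : w.length = n - 1)
    (hw : w ∈ Bset) : w.count 0 = n - (∑ i : Fin n, w.count (i.1 + 1)) - 1 := by
  have hwt := hw.1
  rw [wt_eq_sum_sub_length] at hwt
  have hsum : w.sum = n := by omega
  have hcount := length_eq_count_zero_add_sum_count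
    fun a ha => (List.le_sum_of_mem ha).trans hsum.le
  omega

theorem card_dyck_no_returns_eq_card_Bset_r_general (n : ℕ) (hn : 1 < n) (r : Fin n → ℕ) :
    Nat.card {l : List Bool // IsDyckPath n l ∧ HasAscentType n l r ∧
        ∀ k, 0 < k → k < 2 * n → (l.take k).count true ≠ (l.take k).count false} =
      Nat.card {w : List ℕ // w.length = n - 1 ∧ w ∈ Bset ∧
        w.count 0 = n - (∑ i, r i) - 1 ∧ ∀ i : Fin n, w.count (i.1 + 1) = r i} := by
  have hwords : {w : List ℕ | w.length = n - 1 ∧ w ∈ Bset ∧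
      w.count 0 = n - (∑ i, r i) - 1 ∧ ∀ i : Fin n, w.count (i.1 + 1) = r i} =
      {w | w.length = n - 1 ∧ w ∈ Bset} ∩ closedPathOfWord ⁻¹' {l | HasAscentType n l r} := by
    ext w
    simp only [Set.mem_inter_iff, Set.mem_preimage, Set.mem_ofPred_eq,
      hasAscentType_closedPathOfWord_iff, and_assoc]
    refine and_congr_right fun hlen => and_congr_right fun hw => and_iff_right_of_imp fun hc => ?_
    simpa only [hc] using count_zero_eq_of_mem_Bset (by omega) hlen hw
  have hpaths : {l : List Bool | IsDyckPath n l ∧ HasAscentType n l r ∧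
      ∀ k, 0 < k → k < 2 * n → (l.take k).count true ≠ (l.take k).count false} =
      {l | IsPrimeDyckPath n l} ∩ {l | HasAscentType n l r} := by
    ext l
    exact (and_congr_right fun _ => and_comm).trans and_assoc.symm
  rw [setOf_isPrimeDyckPath_eq_image hn, ← Set.image_inter_preimage, ← hwords] at hpaths
  rw [← Set.coe_ofPred, hpaths, Nat.card_image_of_injective closedPathOfWord_injective,
    Set.coe_ofPred]

/-- The number of Dyck paths of length `2n` with no returns and ascent type `r` equals the
cardinality of `ℬ(r)`, the set of words of length `n - 1` in `ℬ` with `n - |r| - 1`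
letters `0` and `r i` letters `i` for `1 ≤ i ≤ n`. -/
theorem card_dyck_no_returns_eq_card_Bset_r (n : ℕ) (hn : 1 < n) (r : Fin n → ℕ)
    (hrv : ∑ i, (i.1 + 1) * r i = n) (hr : ∑ i, r i < n) :
    Nat.card {l : List Bool // IsDyckPath n l ∧ HasAscentType n l r ∧
        ∀ k, 0 < k → k < 2 * n → (l.take k).count true ≠ (l.take k).count false} =
      Nat.card {w : List ℕ // w.length = n - 1 ∧ w ∈ Bset ∧
        w.count 0 = n - (∑ i, r i) - 1 ∧ ∀ i : Fin n, w.count (i.1 + 1) = r i} :=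
  card_dyck_no_returns_eq_card_Bset_r_general n hn r
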